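/- Let m ≥ 1 and let A ∈ ℂ[t] be a polynomial of degree 2m having exactly m roots (with multiplicity) in the open upper half-plane ℂ₊ and exactly m roots in the open lower half-plane ℂ₋. Let s ∈ {0, m}. Then for every h = (h₁,…,h_m) ∈ ℂ^m there exists exactly one smooth function v : [0,∞) → ℂ with A(D_n)v = 0 on (0,∞), D_n^{s+j−1}v(0) = h_j for j = 1,…,m, and v(x_n) → 0 as x_n → ∞. (For s = 0 these are the generalized Dirichlet conditions, for s = m the generalized Neumann conditions; both are absolutely elliptic at the ODE level.) -/

import Mathlib

noncomputable section
open Complex Filter Set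

/-- `P(D_n) u` at `x`, where `D_n = -i d/dx` and `P` is a polynomial. -/
def polyOp (P : Polynomial ℂ) (u : ℝ → ℂ) (x : ℝ) : ℂ :=
  ∑ k ∈ Finset.range (P.natDegree + 1), P.coeff k * ((-Complex.I) ^ k * iteratedDeriv k u x)

/-- Solution predicate: `v` is a stable solution of `A(D_n)v = 0` on `(0,∞)` with boundary
conditions `D_n^{s+j-1} v(0) = h_j` for `j = 1,…,m` and `v(x_n) → 0` as `x_n → ∞`. -/
def BVPSol (m s : ℕ) (A : Polynomial ℂ) (h : Fin m → ℂ) (v : ℝ → ℂ) : Prop :=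
  ContDiff ℝ (⊤ : ℕ∞) v ∧
  (∀ x : ℝ, 0 < x → polyOp A v x = 0) ∧
  (∀ j : Fin m, (-Complex.I) ^ (s + (j : ℕ)) * iteratedDeriv (s + (j : ℕ)) v 0 = h j) ∧
  Tendsto v atTop (nhds 0)

open Polynomial

/-- Smooth functions. -/
def SmV : Submodule ℂ (ℝ → ℂ) where
  carrier := {v | ContDiff ℝ (⊤ : ℕ∞) v}
  add_mem' := fun {a b} (ha : ContDiff ℝ _ a) (hb : ContDiff ℝ _ b) => show ContDiff ℝ (⊤ : ℕ∞) (fun x => a x + b x) from ContDiff.add ha hb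
  zero_mem' := show ContDiff ℝ (⊤ : ℕ∞) (fun _ : ℝ => (0 : ℂ)) from contDiff_const
  smul_mem' := fun c v (hv : ContDiff ℝ _ v) => show ContDiff ℝ (⊤ : ℕ∞) (fun x => c • v x) from ContDiff.const_smul c hv

theorem smCD (v : SmV) : ContDiff ℝ (⊤ : ℕ∞) v.1 := v.2

theorem smDiff (v : SmV) : Differentiable ℝ v.1 :=
  (smCD v).differentiable (by simp)

theorem deriv_smooth {v : ℝ → ℂ} (hv : ContDiff ℝ (⊤ : ℕ∞) v) : ContDiff ℝ (⊤ : ℕ∞) (deriv v) :=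
  (contDiff_infty_iff_deriv.1 hv).2

/-- `D = -i d/dx`. -/
def DD : Module.End ℂ SmV where
  toFun v := ⟨fun x => -Complex.I * deriv v.1 x, contDiff_const.mul (deriv_smooth v.2)⟩
  map_add' a b := by
    ext x
    have := deriv_add (smDiff a x) (smDiff b x)
    simp only [Submodule.coe_add, Pi.add_apply]
    rw [this]; ring
  map_smul' c a := by
    ext x
    have := deriv_const_smul c (smDiff a x)
    simp only [Submodule.coe_smul, RingHom.id_apply, Pi.smul_apply]
    rw [this]; simp only [smul_eq_mul]; ring

theorem DD_apply (v : SmV) (x : ℝ) : (DD v).1 x = -Complex.I * deriv v.1 x := rfl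

/-- Translation by 1. -/
def TT : Module.End ℂ SmV where
  toFun v := ⟨fun x => v.1 (x + 1), (smCD v).comp (contDiff_id.add contDiff_const)⟩
  map_add' a b := rfl
  map_smul' c a := rfl

theorem TT_apply (v : SmV) (x : ℝ) : (TT v).1 x = v.1 (x + 1) := rfl

theorem DT_comm : Commute DD TT := by
  refine LinearMap.ext fun v => Subtype.ext (funext fun x => ?_)
  change (DD (TT v)).1 x = (TT (DD v)).1 x
  rw [TT_apply, DD_apply, DD_apply]
  congr 1
  exact deriv_comp_add_const v.1 1 x

/-- Functions vanishing on the half line. -/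
def NN : Submodule ℂ SmV where
  carrier := {v | ∀ x : ℝ, 0 < x → v.1 x = 0}
  add_mem' := fun {a b} ha hb x hx => by
    change a.1 x + b.1 x = 0
    rw [ha x hx, hb x hx, add_zero]
  zero_mem' := fun x _ => rfl
  smul_mem' := fun c a ha x hx => by
    change c * a.1 x = 0
    rw [ha x hx, mul_zero]

theorem mem_NN {v : SmV} : v ∈ NN ↔ ∀ x : ℝ, 0 < x → v.1 x = 0 := Iff.rfl

theorem NN_Ici {v : SmV} (hv : v ∈ NN) : ∀ x : ℝ, 0 ≤ x → v.1 x = 0 := by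
  intro x hx
  have h1 : EqOn v.1 (fun _ => 0) (closure (Ioi 0)) :=
    Set.EqOn.closure (fun y hy => hv y hy) (smCD v).continuous continuous_const
  rw [closure_Ioi] at h1
  exact h1 hx

theorem NN_DD {v : SmV} (hv : v ∈ NN) : DD v ∈ NN := by
  intro x hx
  rw [DD_apply]
  have : v.1 =ᶠ[nhds x] fun _ => (0 : ℂ) := by
    filter_upwards [Ioi_mem_nhds hx] with y hy using hv y hy
  rw [this.deriv_eq]; simp

theorem NN_TT {v : SmV} (hv : v ∈ NN) : TT v ∈ NN := by
  intro x hx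
  exact hv (x + 1) (by linarith)

theorem NN_aeval {F : Module.End ℂ SmV} (hF : ∀ v ∈ NN, F v ∈ NN) (P : ℂ[X]) :
    ∀ v ∈ NN, aeval F P v ∈ NN := by
  induction P using Polynomial.induction_on' with
  | add p q hp hq =>
    intro v hv
    rw [map_add]
    exact NN.add_mem (hp v hv) (hq v hv)
  | monomial n a =>
    intro v hv
    rw [aeval_monomial, Module.End.mul_apply, Module.algebraMap_end_apply]
    refine NN.smul_mem _ ?_
    induction n with
    | zero => simpa using hv
    | succ n ih => rw [pow_succ', Module.End.mul_apply]; exact hF _ ih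

theorem DD_pow_apply (k : ℕ) (v : SmV) (x : ℝ) :
    ((DD ^ k) v).1 x = (-Complex.I) ^ k * iteratedDeriv k v.1 x := by
  induction k generalizing x with
  | zero => simp
  | succ k ih =>
    rw [pow_succ', Module.End.mul_apply, DD_apply, iteratedDeriv_succ]
    have : ((DD ^ k) v).1 = fun x => (-Complex.I) ^ k * iteratedDeriv k v.1 x := funext ih
    rw [this]
    have hd : DifferentiableAt ℝ (iteratedDeriv k v.1) x :=
      ((smCD v).differentiable_iteratedDeriv k (by exact_mod_cast WithTop.coe_lt_top _)) x
    rw [deriv_const_mul _ hd]; ring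

theorem aeval_apply_sum (P : ℂ[X]) (v : SmV) (x : ℝ) :
    (aeval DD P v).1 x = ∑ k ∈ Finset.range (P.natDegree + 1), P.coeff k * ((DD ^ k) v).1 x := by
  rw [aeval_eq_sum_range, LinearMap.sum_apply]
  simp [Finset.sum_apply]

theorem polyOp_eq (P : ℂ[X]) (v : SmV) (x : ℝ) : polyOp P v.1 x = (aeval DD P v).1 x := by
  rw [aeval_apply_sum]
  simp only [DD_pow_apply]
  rfl

/-- Exponential factor derivative. -/
theorem hasDerivAt_cexp (c : ℂ) (x : ℝ) :
    HasDerivAt (fun x : ℝ => Complex.exp (c * x)) (c * Complex.exp (c * x)) x := by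
  have h1 : HasDerivAt (fun x : ℝ => c * (x : ℂ)) (c * 1) x :=
    (Complex.ofRealCLM.hasDerivAt (x := x)).const_mul c
  have := h1.cexp
  convert this using 1; ring

theorem hasDerivAt_twist (z : ℂ) (v : SmV) (x : ℝ) :
    HasDerivAt (fun x : ℝ => Complex.exp (-(Complex.I * z) * x) * v.1 x)
      (Complex.exp (-(Complex.I * z) * x) * (Complex.I * ((aeval DD (X - C z) v).1 x))) x := by
  have h := (hasDerivAt_cexp (-(Complex.I * z)) x).mul (smDiff v x).hasDerivAt
  refine HasDerivAt.congr_deriv (f := fun x : ℝ => Complex.exp (-(Complex.I * z) * x) * v.1 x) h ?_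
  have : (aeval DD (X - C z) v).1 x = -Complex.I * deriv v.1 x - z * v.1 x := by
    rw [map_sub, aeval_X, aeval_C]; rfl
  rw [this]
  linear_combination (Complex.exp (-(Complex.I * z) * x) * deriv v.1 x) * Complex.I_sq

theorem exp_cancel (c : ℂ) (x : ℝ) (w : ℂ) :
    Complex.exp (c * x) * (Complex.exp (-c * x) * w) = w := by
  rw [← mul_assoc, ← Complex.exp_add]; ring_nf; simp

/-- First-order homogeneous solutions. -/
theorem first_order {z : ℂ} {v : SmV} (hv : aeval DD (X - C z) v ∈ NN) {x : ℝ} (hx : 0 ≤ x) :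
    v.1 x = Complex.exp (Complex.I * z * x) * v.1 0 := by
  have key : ∀ y ∈ Icc 0 x, (fun x : ℝ => Complex.exp (-(Complex.I * z) * x) * v.1 x) y =
      (fun x : ℝ => Complex.exp (-(Complex.I * z) * x) * v.1 x) 0 := by
    apply constant_of_has_deriv_right_zero
    · exact fun y _ => (hasDerivAt_twist z v y).continuousAt.continuousWithinAt
    · intro y hy
      have := hasDerivAt_twist z v y
      rw [NN_Ici hv y hy.1] at this
      simpa using this.hasDerivWithinAt
  have h2 := key x ⟨hx, le_rfl⟩
  simp only [Complex.ofReal_zero, mul_zero, Complex.exp_zero, one_mul] at h2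
  rw [← h2, exp_cancel]

/-- product of linear factors -/
def LP (L : Multiset ℂ) : ℂ[X] := (L.map fun z => X - C z).prod

theorem LP_zero : LP 0 = 1 := by simp [LP]
theorem LP_cons (z : ℂ) (L : Multiset ℂ) : LP (z ::ₘ L) = (X - C z) * LP L := by simp [LP]
theorem LP_monic (L : Multiset ℂ) : (LP L).Monic := monic_multiset_prod_of_monic _ _ fun z _ => monic_X_sub_C z
theorem LP_natDegree (L : Multiset ℂ) : (LP L).natDegree = L.card := by
  simp [LP, natDegree_multiset_prod_X_sub_C_eq_card]

theorem LP_coprime (L : Multiset ℂ) (q : ℂ[X]) (h : ∀ z ∈ L, q.eval z ≠ 0) : IsCoprime (LP L) q := by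
  induction L using Multiset.induction_on with
  | empty => rw [LP_zero]; exact isCoprime_one_left
  | cons z L ih =>
    rw [LP_cons]
    refine IsCoprime.mul_left ?_ (ih fun w hw => h w (Multiset.mem_cons_of_mem hw))
    rw [(irreducible_X_sub_C z).coprime_iff_not_dvd, dvd_iff_isRoot]
    exact h z (Multiset.mem_cons_self _ _)

theorem LP_eval_ne (L : Multiset ℂ) (w : ℂ) (h : w ∉ L) : (LP L).eval w ≠ 0 := by
  induction L using Multiset.induction_on with
  | empty => simp [LP_zero]
  | cons z L ih =>
    rw [LP_cons, eval_mul]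
    rw [Multiset.mem_cons, not_or] at h
    refine mul_ne_zero ?_ (ih h.2)
    simpa [sub_eq_zero] using h.1

theorem aeval_mul_ap (F : Module.End ℂ SmV) (P Q : ℂ[X]) (v : SmV) :
    aeval F (P * Q) v = aeval F P (aeval F Q v) := by
  rw [map_mul, Module.End.mul_apply]

theorem aeval_comm_ap (P Q : ℂ[X]) (v : SmV) :
    aeval DD P (aeval TT Q v) = aeval TT Q (aeval DD P v) := by
  have h1 : Commute DD (aeval TT Q) := by
    induction Q using Polynomial.induction_on' with
    | add p q hp hq => rw [map_add]; exact hp.add_right hq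
    | monomial n a =>
      rw [aeval_monomial]
      exact (Algebra.commute_algebraMap_right a DD).mul_right (DT_comm.pow_right n)
  have h2 : Commute (aeval DD P) (aeval TT Q) := by
    induction P using Polynomial.induction_on' with
    | add p q hp hq => rw [map_add]; exact hp.add_left hq
    | monomial n a =>
      rw [aeval_monomial]
      exact (Algebra.commute_algebraMap_left a _).mul_left (h1.pow_left n)
  have := congrArg (fun F => F v) h2.eq
  simpa only [Module.End.mul_apply] using this

/-- translations annihilate -/
theorem trans_kill (L : Multiset ℂ) (v : SmV) (hv : aeval DD (LP L) v ∈ NN) :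
    aeval TT (LP (L.map fun z => Complex.exp (Complex.I * z))) v ∈ NN := by
  induction L using Multiset.induction_on generalizing v with
  | empty => simpa [LP_zero] using hv
  | cons z L ih =>
    rw [LP_cons, mul_comm, aeval_mul_ap] at hv
    have h1 := ih _ hv
    rw [← aeval_comm_ap] at h1
    rw [Multiset.map_cons, LP_cons, aeval_mul_ap]
    generalize aeval TT (LP (L.map fun z => Complex.exp (Complex.I * z))) v = k at h1
    intro x hx
    have e : (aeval TT (X - C (Complex.exp (Complex.I * z))) k).1 x =
        k.1 (x + 1) - Complex.exp (Complex.I * z) * k.1 x := by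
      rw [map_sub, aeval_X, aeval_C]; rfl
    rw [e, first_order h1 hx.le, first_order h1 (by linarith : 0 ≤ x + 1)]
    rw [← mul_assoc, ← Complex.exp_add]
    push_cast
    ring_nf

theorem trans_uniq (L : Multiset ℂ) (hL : ∀ w ∈ L, 1 < ‖w‖) (v : SmV)
    (hv : aeval TT (LP L) v ∈ NN) (h0 : Tendsto v.1 atTop (nhds 0)) : v ∈ NN := by
  induction L using Multiset.induction_on generalizing v with
  | empty => simpa [LP_zero] using hv
  | cons z L ih =>
    rw [LP_cons, mul_comm, aeval_mul_ap] at hv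
    have e : ∀ x, (aeval TT (X - C z) v).1 x = v.1 (x + 1) - z * v.1 x := by
      intro x
      rw [map_sub, aeval_X, aeval_C]; rfl
    have hk := ih (fun w hw => hL w (Multiset.mem_cons_of_mem hw)) _ hv (by
      have : (aeval TT (X - C z) v).1 = fun x => v.1 (x + 1) - z * v.1 x := funext e
      rw [this]
      have h1 : Tendsto (fun x : ℝ => v.1 (x + 1)) atTop (nhds 0) :=
        h0.comp (tendsto_atTop_add_const_right _ _ tendsto_id)
      simpa using h1.sub (h0.const_mul z))
    have hz : 1 < ‖z‖ := hL z (Multiset.mem_cons_self _ _)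
    intro x hx
    have hn : ∀ n : ℕ, v.1 (x + n) = z ^ n * v.1 x := by
      intro n
      induction n with
      | zero => simp
      | succ n ihn =>
        have := hk (x + n) (by positivity)
        rw [e, ihn, sub_eq_zero] at this
        push_cast
        rw [← add_assoc, this]; ring
    by_contra hne
    have ht : Tendsto (fun n : ℕ => ‖v.1 (x + n)‖) atTop (nhds 0) := by
      have := (h0.comp (tendsto_atTop_add_const_left _ x tendsto_natCast_atTop_atTop)).norm
      simpa using this
    have hle : ∀ n : ℕ, ‖v.1 x‖ ≤ ‖v.1 (x + n)‖ := by
      intro n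
      rw [hn, norm_mul, norm_pow]
      exact le_mul_of_one_le_left (norm_nonneg _) (one_le_pow₀ hz.le)
    have := ge_of_tendsto' ht hle
    exact hne (norm_le_zero_iff.1 this)

theorem norm_exp_I (z : ℂ) (x : ℝ) : ‖Complex.exp (Complex.I * z * x)‖ = Real.exp (-(z.im) * x) := by
  rw [Complex.norm_exp]; simp

theorem lower_uniq (L : Multiset ℂ) (hL : ∀ w ∈ L, w.im < 0) (v : SmV)
    (hv : aeval DD (LP L) v ∈ NN) (h0 : Tendsto v.1 atTop (nhds 0)) : v ∈ NN := by
  refine trans_uniq _ ?_ v (trans_kill L v hv) h0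
  intro w hw
  obtain ⟨z, hz, rfl⟩ := Multiset.mem_map.1 hw
  have := norm_exp_I z 1
  simp only [Complex.ofReal_one, mul_one] at this
  rw [this, Real.one_lt_exp_iff]
  linarith [hL z hz]

theorem upper_decay (L : Multiset ℂ) (hL : ∀ w ∈ L, 0 < w.im) (v : SmV)
    (hv : aeval DD (LP L) v ∈ NN) :
    ∃ c > 0, ∃ K : ℝ, 0 ≤ K ∧ ∀ x : ℝ, 0 ≤ x → ‖v.1 x‖ ≤ K * Real.exp (-c * x) := by
  induction L using Multiset.induction_on generalizing v with
  | empty =>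
    refine ⟨1, one_pos, 0, le_rfl, fun x hx => ?_⟩
    rw [LP_zero, map_one] at hv
    have := NN_Ici hv x hx
    rw [Module.End.one_apply] at this
    simp [this]
  | cons z L ih =>
    rw [LP_cons, mul_comm, aeval_mul_ap] at hv
    obtain ⟨c, hc, K, hK, hb⟩ := ih (fun w hw => hL w (Multiset.mem_cons_of_mem hw)) _ hv
    have hz := hL z (Multiset.mem_cons_self _ _)
    obtain ⟨d, hd, hdc, hdz⟩ : ∃ d : ℝ, 0 < d ∧ d ≤ c ∧ d < z.im :=
      ⟨min c (z.im / 2), by positivity, min_le_left _ _, (min_le_right _ _).trans_lt (by linarith)⟩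
    have hb' : ∀ x : ℝ, 0 ≤ x → ‖(aeval DD (X - C z) v).1 x‖ ≤ K * Real.exp (-d * x) := by
      intro x hx
      refine (hb x hx).trans (mul_le_mul_of_nonneg_left (Real.exp_le_exp.2 ?_) hK)
      nlinarith
    have ha : 0 < z.im - d := by linarith
    have hne := ha.ne'
    refine ⟨d, hd, ‖v.1 0‖ + K / (z.im - d), by positivity, fun x hx => ?_⟩
    have hexp : ∀ y : ℝ, ‖Complex.exp (-(Complex.I * z) * y)‖ = Real.exp (z.im * y) := by
      intro y
      rw [Complex.norm_exp]; simp
    have key := image_norm_le_of_norm_deriv_right_le_deriv_boundary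
      (a := 0) (b := x)
      (f := fun x : ℝ => Complex.exp (-(Complex.I * z) * x) * v.1 x)
      (f' := fun x : ℝ => Complex.exp (-(Complex.I * z) * x) * (Complex.I * ((aeval DD (X - C z) v).1 x)))
      (B := fun y => ‖v.1 0‖ + K / (z.im - d) * Real.exp ((z.im - d) * y))
      (B' := fun y => K * Real.exp ((z.im - d) * y))
      (fun y _ => (hasDerivAt_twist z v y).continuousAt.continuousWithinAt)
      (fun y _ => (hasDerivAt_twist z v y).hasDerivWithinAt)
      (by simp; positivity)
      (by
        intro y
        have h1 : HasDerivAt (fun y : ℝ => (z.im - d) * y) ((z.im - d) * 1) y :=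
          (hasDerivAt_id y).const_mul _
        have := (h1.exp.const_mul (K / (z.im - d))).const_add ‖v.1 0‖
        refine HasDerivAt.congr_deriv this ?_
        field_simp)
      (by
        intro y hy
        rw [norm_mul, norm_mul, hexp, Complex.norm_I, one_mul]
        refine (mul_le_mul_of_nonneg_left (hb' y hy.1) (Real.exp_pos _).le).trans (le_of_eq ?_)
        rw [mul_left_comm, ← Real.exp_add]
        ring_nf)
      (right_mem_Icc.2 hx)
    simp only [norm_mul, hexp] at key
    have h3 : ‖v.1 x‖ = Real.exp (-z.im * x) * (Real.exp (z.im * x) * ‖v.1 x‖) := by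
      rw [← mul_assoc, ← Real.exp_add]; ring_nf; simp
    rw [h3]
    refine (mul_le_mul_of_nonneg_left key (Real.exp_pos _).le).trans ?_
    have h4 : Real.exp (-z.im * x) * (‖v.1 0‖ + K / (z.im - d) * Real.exp ((z.im - d) * x)) =
      Real.exp (-z.im * x) * ‖v.1 0‖ + K / (z.im - d) * Real.exp (-d * x) := by
      rw [mul_add, mul_left_comm, ← Real.exp_add]; ring_nf
    rw [h4, add_mul]
    have h5 : Real.exp (-z.im * x) ≤ Real.exp (-d * x) := Real.exp_le_exp.2 (by nlinarith)
    nlinarith [norm_nonneg (v.1 0)]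

theorem upper_tendsto (L : Multiset ℂ) (hL : ∀ w ∈ L, 0 < w.im) (v : SmV)
    (hv : aeval DD (LP L) v ∈ NN) : Tendsto v.1 atTop (nhds 0) := by
  obtain ⟨c, hc, K, hK, hb⟩ := upper_decay L hL v hv
  refine squeeze_zero_norm' (a := fun x => K * Real.exp (-c * x)) ?_ ?_
  · filter_upwards [eventually_ge_atTop 0] with x hx using hb x hx
  · have h1 : Tendsto (fun x : ℝ => -c * x) atTop atBot :=
      tendsto_id.const_mul_atTop_of_neg (by linarith)
    simpa using (Real.tendsto_exp_atBot.comp h1).const_mul K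

/-- zero initial data -/
theorem ivp_uniq (L : Multiset ℂ) (v : SmV) (hv : aeval DD (LP L) v ∈ NN)
    (h0 : ∀ j < L.card, ((DD ^ j) v).1 0 = 0) : v ∈ NN := by
  induction L using Multiset.induction_on with
  | empty => simpa [LP_zero] using hv
  | cons z L ih =>
    rw [LP_cons, aeval_mul_ap] at hv
    rw [Multiset.card_cons] at h0
    refine ih ?_ (fun j hj => h0 j (by omega))
    intro x hx
    rw [first_order hv hx.le, aeval_apply_sum, Finset.sum_eq_zero, mul_zero]
    intro k hk
    rw [LP_natDegree, Finset.mem_range] at hk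
    rw [h0 k hk, mul_zero]

theorem first_order_exists (z c : ℂ) (f : SmV) :
    ∃ g : SmV, aeval DD (X - C z) g = f ∧ g.1 0 = c := by
  have hexp : ∀ a : ℂ, ContDiff ℝ (⊤ : ℕ∞) (fun x : ℝ => Complex.exp (a * x)) := fun a =>
    (contDiff_const.mul Complex.ofRealCLM.contDiff).cexp
  set p : ℝ → ℂ := fun t => Complex.exp (-(Complex.I * z) * t) * f.1 t with hp
  have hps : ContDiff ℝ (⊤ : ℕ∞) p := (hexp _).mul (smCD f)
  have hder : ∀ x, HasDerivAt (fun x => ∫ t in (0:ℝ)..x, p t) (p x) x := fun x =>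
    hps.continuous.integral_hasStrictDerivAt 0 x |>.hasDerivAt
  have hint : ContDiff ℝ (⊤ : ℕ∞) (fun x => ∫ t in (0:ℝ)..x, p t) := by
    rw [contDiff_infty_iff_deriv]
    refine ⟨fun x => (hder x).differentiableAt, ?_⟩
    have : deriv (fun x => ∫ t in (0:ℝ)..x, p t) = p := funext fun x => (hder x).deriv
    rw [this]; exact hps
  let g : SmV := ⟨fun x => Complex.exp (Complex.I * z * x) * (c + Complex.I * ∫ t in (0:ℝ)..x, p t),
    (hexp _).mul (contDiff_const.add (contDiff_const.mul hint))⟩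
  refine ⟨g, ?_, by simp [g]⟩
  refine Subtype.ext (funext fun x => ?_)
  have e : (aeval DD (X - C z) g).1 x = -Complex.I * deriv g.1 x - z * g.1 x := by
    rw [map_sub, aeval_X, aeval_C]; rfl
  have hd := (hasDerivAt_cexp (Complex.I * z) x).mul (((hder x).const_mul Complex.I).const_add c)
  have hd' : deriv g.1 x = _ := hd.deriv
  rw [e, hd']
  have h2 := exp_cancel (Complex.I * z) x (f.1 x)
  simp only [g, hp]
  linear_combination (-(z * Complex.exp (Complex.I * z * x) * (c + Complex.I * ∫ t in (0:ℝ)..x, p t)) - f.1 x) * Complex.I_sq - Complex.I ^ 2 * h2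

theorem ivp_exists (L : Multiset ℂ) (f : SmV) (h : ℕ → ℂ) :
    ∃ v : SmV, aeval DD (LP L) v = f ∧ ∀ j < L.card, ((DD ^ j) v).1 0 = h j := by
  induction L using Multiset.induction_on generalizing f with
  | empty => exact ⟨f, by simp [LP_zero], by simp⟩
  | cons z L ih =>
    obtain ⟨g, hg, hg0⟩ := first_order_exists z
      (∑ k ∈ Finset.range (L.card + 1), (LP L).coeff k * h k) f
    obtain ⟨v, hv, hv0⟩ := ih g
    refine ⟨v, by rw [LP_cons, aeval_mul_ap, hv, hg], ?_⟩
    intro j hj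
    rw [Multiset.card_cons] at hj
    rcases Nat.lt_succ_iff_lt_or_eq.1 hj with hj | rfl
    · exact hv0 j hj
    · rw [← hv, aeval_apply_sum, LP_natDegree, Finset.sum_range_succ, Finset.sum_range_succ] at hg0
      have h1 : (LP L).coeff L.card = 1 := by
        have := LP_monic L
        rw [Monic, leadingCoeff, LP_natDegree] at this
        exact this
      rw [h1, one_mul, one_mul, Finset.sum_congr rfl (fun k hk => by
        rw [hv0 k (Finset.mem_range.1 hk)])] at hg0
      exact add_left_cancel hg0

theorem bezout_NN {P Q : ℂ[X]} (hPQ : IsCoprime P Q) (v : SmV) (hP : aeval DD P v ∈ NN)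
    (hQ : aeval DD Q v ∈ NN) : v ∈ NN := by
  obtain ⟨a, b, hab⟩ := hPQ
  have : v = aeval DD a (aeval DD P v) + aeval DD b (aeval DD Q v) := by
    rw [← aeval_mul_ap, ← aeval_mul_ap, ← LinearMap.add_apply, ← map_add, hab, map_one]; rfl
  rw [this]
  exact NN.add_mem (NN_aeval (fun _ => NN_DD) _ _ hP) (NN_aeval (fun _ => NN_DD) _ _ hQ)

/-- Decaying solutions are annihilated by the upper factor. -/
theorem upper_of_decay (U L : Multiset ℂ) (hU : ∀ w ∈ U, 0 < w.im) (hL : ∀ w ∈ L, w.im < 0)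
    (u : SmV) (hu : aeval DD (LP U * LP L) u ∈ NN) (h0 : Tendsto u.1 atTop (nhds 0)) :
    aeval DD (LP U) u ∈ NN := by
  have hc : IsCoprime (LP U) (LP L) := LP_coprime U _ fun z hz => LP_eval_ne L z fun hz' =>
    (hU z hz).not_gt (hL z hz')
  obtain ⟨a, b, hab⟩ := hc
  have hplus : aeval DD (LP U) (aeval DD (b * LP L) u) ∈ NN := by
    rw [← aeval_mul_ap, show LP U * (b * LP L) = b * (LP U * LP L) by ring, aeval_mul_ap]
    exact NN_aeval (fun _ => NN_DD) _ _ hu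
  have hminus : aeval DD (LP L) (aeval DD (a * LP U) u) ∈ NN := by
    rw [← aeval_mul_ap, show LP L * (a * LP U) = a * (LP U * LP L) by ring, aeval_mul_ap]
    exact NN_aeval (fun _ => NN_DD) _ _ hu
  have hsum : aeval DD (a * LP U) u + aeval DD (b * LP L) u = u := by
    rw [← LinearMap.add_apply, ← map_add, hab, map_one]; rfl
  have ht := upper_tendsto U hU _ hplus
  have hmt : Tendsto (aeval DD (a * LP U) u).1 atTop (nhds 0) := by
    have : (aeval DD (a * LP U) u).1 = fun x => u.1 x - (aeval DD (b * LP L) u).1 x := by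
      rw [eq_sub_of_add_eq hsum]; rfl
    rw [this]
    simpa using h0.sub ht
  have hm := lower_uniq L hL _ hminus hmt
  rw [← hsum, map_add]
  exact NN.add_mem (NN_aeval (fun _ => NN_DD) _ _ hm) hplus

theorem A_factor (m : ℕ) (A : Polynomial ℂ) (hdeg : A.natDegree = 2 * m)
    (hrootsp : (A.roots.filter fun z => 0 < z.im).card = m)
    (hrootsm : (A.roots.filter fun z => z.im < 0).card = m) :
    A = C A.leadingCoeff * (LP (A.roots.filter fun z => 0 < z.im) *
      LP (A.roots.filter fun z => z.im < 0)) := by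
  have hs := IsAlgClosed.splits A
  have hcard : A.roots.card = 2 * m := by rw [← hdeg]; exact hs.natDegree_eq_card_roots.symm
  have hsplit := Multiset.filter_add_not (fun z : ℂ => 0 < z.im) A.roots
  have hc2 : (A.roots.filter fun z => ¬ 0 < z.im).card = m := by
    have := congrArg Multiset.card hsplit
    rw [Multiset.card_add, hrootsp, hcard] at this
    omega
  have heq : (A.roots.filter fun z => z.im < 0) = A.roots.filter fun z => ¬ 0 < z.im :=
    Multiset.eq_of_le_of_card_le
      (Multiset.monotone_filter_right _ fun z hz => not_lt.2 (le_of_lt hz)) (by rw [hc2, hrootsm])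
  rw [heq, LP, LP, ← Multiset.prod_add, ← Multiset.map_add, hsplit]
  exact hs.eq_prod_roots

/-- For a properly elliptic polynomial `A` of degree `2m` (exactly `m` roots in
each open half-plane), the generalized Dirichlet (`s = 0`) and generalized Neumann (`s = m`)
half-line problems are uniquely solvable for arbitrary boundary data `h ∈ ℂ^m`
(uniqueness on `[0,∞)`). -/
theorem dirichlet_neumann_halfline_unique_solvability
    (m : ℕ) (hm : 1 ≤ m) (A : Polynomial ℂ) (hdeg : A.natDegree = 2 * m)
    (hrootsp : (A.roots.filter fun z => 0 < z.im).card = m)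
    (hrootsm : (A.roots.filter fun z => z.im < 0).card = m)
    (s : ℕ) (hs : s = 0 ∨ s = m) (h : Fin m → ℂ) :
    (∃ v : ℝ → ℂ, BVPSol m s A h v) ∧
    (∀ v w : ℝ → ℂ, BVPSol m s A h v → BVPSol m s A h w → EqOn v w (Ici 0)) := by
  have hA := A_factor m A hdeg hrootsp hrootsm
  have hA0 : A.leadingCoeff ≠ 0 := by
    rw [Ne, leadingCoeff_eq_zero]
    rintro rfl
    simp at hdeg
    omega
  set U := A.roots.filter fun z => 0 < z.im with hUdef
  set L := A.roots.filter fun z => z.im < 0 with hLdef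
  have hU : ∀ w ∈ U, 0 < w.im := fun w hw => (Multiset.mem_filter.1 hw).2
  have hL : ∀ w ∈ L, w.im < 0 := fun w hw => (Multiset.mem_filter.1 hw).2
  have hcop : IsCoprime (X ^ s : ℂ[X]) (LP U) := by
    refine (LP_coprime U _ fun z hz => ?_).symm
    have : z ≠ 0 := by
      rintro rfl
      simpa using hU 0 hz
    simp [this]
  constructor
  · obtain ⟨v0, hv0, hd0⟩ := ivp_exists U 0 (fun j => if hj : j < m then h ⟨j, hj⟩ else 0)
    obtain ⟨a, b, hab⟩ := hcop
    have hPv : aeval DD (LP U) (aeval DD a v0) = 0 := by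
      rw [← aeval_mul_ap, mul_comm, aeval_mul_ap, hv0, map_zero]
    refine ⟨(aeval DD a v0).1, (aeval DD a v0).2, ?_, ?_, ?_⟩
    · intro x _
      rw [polyOp_eq, hA, mul_comm (LP U), ← mul_assoc, aeval_mul_ap, hPv, map_zero]
      rfl
    · intro j
      rw [← DD_pow_apply, add_comm s, pow_add, Module.End.mul_apply]
      have h1 : (DD ^ s) (aeval DD a v0) = v0 := by
        have h2 : (DD ^ s) (aeval DD a v0) = aeval DD (a * X ^ s) v0 := by
          rw [mul_comm, aeval_mul_ap, aeval_X_pow]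
        rw [h2, eq_sub_of_add_eq hab, map_sub, LinearMap.sub_apply, aeval_mul_ap, hv0, map_zero,
          map_one, sub_zero]
        rfl
      rw [h1, hd0 j (by rw [hrootsp]; exact j.2)]
      simp
    · exact upper_tendsto U hU _ (by rw [hPv]; exact NN.zero_mem)
  · rintro v w ⟨hv1, hv2, hv3, hv4⟩ ⟨hw1, hw2, hw3, hw4⟩
    let v' : SmV := ⟨v, hv1⟩
    let w' : SmV := ⟨w, hw1⟩
    have hmem : ∀ u : SmV, (∀ x : ℝ, 0 < x → polyOp A u.1 x = 0) →
        aeval DD (LP U * LP L) u ∈ NN := by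
      intro u hu x hx
      have := hu x hx
      rw [polyOp_eq, hA, aeval_mul_ap, aeval_C] at this
      exact (mul_eq_zero.1 this).resolve_left hA0
    have hsub : aeval DD (LP U * LP L) (v' - w') ∈ NN := by
      rw [map_sub]
      exact NN.sub_mem (hmem v' hv2) (hmem w' hw2)
    have hup := upper_of_decay U L hU hL (v' - w') hsub (by
      have := hv4.sub hw4
      rw [sub_zero] at this
      exact this)
    have hg : (DD ^ s) (v' - w') ∈ NN := by
      refine ivp_uniq U _ ?_ ?_
      · rw [← aeval_X_pow (R := ℂ) DD, ← aeval_mul_ap, mul_comm, aeval_mul_ap]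
        exact NN_aeval (fun _ => NN_DD) _ _ hup
      · intro j hj
        rw [hrootsp] at hj
        rw [← Module.End.mul_apply, ← pow_add, add_comm j, map_sub]
        change ((DD ^ (s + j)) v').1 0 - ((DD ^ (s + j)) w').1 0 = 0
        rw [DD_pow_apply, DD_pow_apply, sub_eq_zero]
        exact (hv3 ⟨j, hj⟩).trans (hw3 ⟨j, hj⟩).symm
    have hfin := bezout_NN hcop (v' - w') (by rw [aeval_X_pow]; exact hg) hup
    intro x hx
    exact sub_eq_zero.1 (NN_Ici hfin x hx)
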